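/- Let b ∈ ℂ with 0 < arg b < π/2 (so that Im(b²) > 0). Then lim_{x→0} x · G_b(x) = 1/(2π), where the limit is taken over x ∈ ℂ tending to 0 at which G_b(x) is defined. -/

import Mathlib

open Complex Filter Topology

/-- ζ̄_b = exp(−πi/4 − (πi/12)(b² + b^{−2})). -/
noncomputable def zetaBar (b : ℂ) : ℂ :=
  Complex.exp (-(Real.pi * Complex.I) / 4 - (Real.pi * Complex.I) / 12 * (b ^ 2 + b⁻¹ ^ 2))

/-- The quantum dilogarithm `G_b(x)`, defined for `Im(b²) > 0` by the infinite product
`ζ̄_b · ∏_{n=1}^∞ (1 − e^{2πi b⁻¹(x − n b⁻¹)}) / ∏_{n=0}^∞ (1 − e^{2πi b(x + n b)})`. -/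
noncomputable def Gb (b x : ℂ) : ℂ :=
  zetaBar b *
      (∏' n : ℕ, (1 - Complex.exp (2 * Real.pi * Complex.I * b⁻¹ * (x - (n + 1) * b⁻¹)))) /
    (∏' n : ℕ, (1 - Complex.exp (2 * Real.pi * Complex.I * b * (x + n * b))))

/-- `b(r) = e^{iπ/4} √r`, so that `b(r)² = i r`. -/
noncomputable def br (r : ℝ) : ℂ :=
  Complex.exp (Real.pi * Complex.I / 4) * (Real.sqrt r : ℂ)

/-!
In terms of `q`-Pochhammer symbols, `G_b(x) = ζ̄_b (q̃ e^{2πix/b}; q̃)_∞ / (e^{2πibx}; q)_∞` with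
`q = e^{2πib²}` and `q̃ = e^{-2πib⁻²}`. The only factor of the denominator vanishing at `x = 0` is
`1 - e^{2πibx}`, which gives a simple pole; what remains is continuous there, with the value
`ζ̄_b (q̃; q̃)_∞ / (q; q)_∞`. Since `ζ̄_b = i^{-1/2} q̃^{1/24} q^{-1/24}`, this value is
`i^{-1/2} η(-1/b²) / η(b²)`, and the inversion formula of the Dedekind eta function evaluates it.
-/

open Function.Periodic
open scoped ModularForm Real

local notation "𝕢" => qParam

section QPochhammer

/-- The infinite `q`-Pochhammer symbol `(a; q)_∞`, in terms of which `Gb` is written. It is only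
meaningful where the product converges, for instance for `‖q‖ < 1`. -/
noncomputable def qPochhammer {R : Type*} [CommRing R] [TopologicalSpace R] (a q : R) : R :=
  ∏' n : ℕ, (1 - a * q ^ n)

variable {R : Type*} [NormedCommRing R] [NormOneClass R] [CompleteSpace R] {q : R}

lemma multipliable_one_sub_mul_pow (a : R) (hq : ‖q‖ < 1) :
    Multipliable fun n : ℕ => 1 - a * q ^ n := by
  simp_rw [sub_eq_add_neg]
  refine multipliable_one_add_of_summable ?_
  simpa only [norm_neg] using
    ((summable_norm_geometric_of_norm_lt_one hq).mul_left ‖a‖).of_nonneg_of_le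
      (fun _ => norm_nonneg _) fun n => norm_mul_le a (q ^ n)

lemma qPochhammer_eq_one_sub_mul (a : R) (hq : ‖q‖ < 1) :
    qPochhammer a q = (1 - a) * qPochhammer (a * q) q := by
  have hfactor (n : ℕ) : 1 - a * q ^ (n + 1) = 1 - a * q * q ^ n := by ring
  have htail : Multipliable fun n : ℕ => 1 - a * q ^ (n + 1) := by
    simpa only [hfactor] using multipliable_one_sub_mul_pow (a * q) hq
  rw [qPochhammer, tprod_eq_zero_mul' (f := fun n => 1 - a * q ^ n) htail, pow_zero, mul_one]
  simp only [hfactor, qPochhammer]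

lemma continuous_qPochhammer (hq : ‖q‖ < 1) : Continuous fun a : R => qPochhammer a q := by
  refine continuous_iff_continuousAt.mpr fun a => ?_
  simp only [ContinuousAt, qPochhammer, sub_eq_add_neg]
  refine tendsto_tprod_one_add_of_dominated_convergence
    (bound := fun n => (‖a‖ + 1) * ‖q ^ n‖)
    ((summable_norm_geometric_of_norm_lt_one hq).mul_left _)
    (fun n => (continuous_mul_const (q ^ n)).neg.tendsto a) ?_
  have hnorm : ∀ᶠ c in 𝓝 a, ‖c‖ < ‖a‖ + 1 :=
    continuous_norm.continuousAt.eventually_lt_const (lt_add_one _)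
  filter_upwards [hnorm] with c hc n
  calc ‖-(c * q ^ n)‖ ≤ ‖c‖ * ‖q ^ n‖ := (norm_neg _).trans_le (norm_mul_le _ _)
    _ ≤ (‖a‖ + 1) * ‖q ^ n‖ := by gcongr

end QPochhammer

lemma eta_eq_qParam_mul_qPochhammer (τ : ℂ) : η τ = 𝕢 24 τ * qPochhammer (𝕢 1 τ) (𝕢 1 τ) := by
  simp only [ModularForm.eta, ModularForm.eta_q, qPochhammer, pow_succ']

lemma qPochhammer_qParam_self_ne_zero {τ : ℂ} (hτ : 0 < τ.im) :
    qPochhammer (𝕢 1 τ) (𝕢 1 τ) ≠ 0 :=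
  right_ne_zero_of_mul (eta_eq_qParam_mul_qPochhammer τ ▸ ModularForm.eta_ne_zero hτ)

lemma qParam_add (h : ℝ) (z w : ℂ) : 𝕢 h (z + w) = 𝕢 h z * 𝕢 h w := by
  simp only [qParam, ← Complex.exp_add, mul_add, add_div]

lemma qParam_nat_mul (h : ℝ) (n : ℕ) (z : ℂ) : 𝕢 h (n * z) = 𝕢 h z ^ n := by
  rw [qParam, qParam, ← Complex.exp_nat_mul]
  ring_nf

lemma hasDerivAt_qParam (h : ℝ) (z : ℂ) : HasDerivAt (𝕢 h) (2 * π * I / h * 𝕢 h z) z := by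
  have hlin : HasDerivAt (fun w : ℂ => 2 * π * I * w / h) (2 * π * I / h) z := by
    simpa using ((hasDerivAt_id z).const_mul (2 * π * I)).div_const (h : ℂ)
  rw [mul_comm]
  exact hlin.cexp

lemma tendsto_sub_div_sub_of_hasDerivAt {𝕜 : Type*} [NontriviallyNormedField 𝕜] {f : 𝕜 → 𝕜}
    {f' a : 𝕜} (hf : HasDerivAt f f' a) (hf' : f' ≠ 0) :
    Tendsto (fun x => (x - a) / (f x - f a)) (𝓝[≠] a) (𝓝 f'⁻¹) := by
  simpa only [slope_def_field, inv_div] using (hasDerivAt_iff_tendsto_slope.mp hf).inv₀ hf'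

lemma tendsto_div_one_sub_qParam_const_mul {h : ℝ} (hh : h ≠ 0) {c : ℂ} (hc : c ≠ 0) :
    Tendsto (fun x : ℂ => x / (1 - 𝕢 h (c * x))) (𝓝[≠] 0) (𝓝 (-(2 * π * I * c / h)⁻¹)) := by
  have hderiv : HasDerivAt (fun x : ℂ => 1 - 𝕢 h (c * x)) (-(2 * π * I * c / h)) 0 := by
    have hcomp := (hasDerivAt_qParam h (c * 0)).comp 0 ((hasDerivAt_id (0 : ℂ)).const_mul c)
    simpa [qParam, Function.comp_def, div_mul_eq_mul_div] using hcomp.const_sub 1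
  simpa [qParam, inv_neg] using
    tendsto_sub_div_sub_of_hasDerivAt hderiv (by simp [hh, hc, Real.pi_ne_zero])

lemma tendsto_qPochhammer_qParam_const_mul (h : ℝ) (c a : ℂ) {q : ℂ} (hq : ‖q‖ < 1) :
    Tendsto (fun x : ℂ => qPochhammer (𝕢 h (c * x) * a) q) (𝓝 0) (𝓝 (qPochhammer a q)) := by
  have hcont : Continuous fun x : ℂ => qPochhammer (𝕢 h (c * x) * a) q :=
    (continuous_qPochhammer hq).comp
      ((continuous_qParam.comp (continuous_const_mul c)).mul_const a)
  simpa [qParam] using hcont.tendsto 0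

lemma im_sq_eq_norm_sq_mul_sin_two_mul_arg (z : ℂ) :
    (z ^ 2).im = ‖z‖ ^ 2 * Real.sin (2 * z.arg) := by
  rw [sq, mul_im, ← norm_mul_cos_arg z, ← norm_mul_sin_arg z, Real.sin_two_mul]
  ring

lemma im_sq_pos_of_arg {z : ℂ} (h1 : 0 < z.arg) (h2 : z.arg < π / 2) : 0 < (z ^ 2).im := by
  have hz : z ≠ 0 := by
    rintro rfl
    simp at h1
  have hsin : 0 < Real.sin (2 * z.arg) :=
    Real.sin_pos_of_pos_of_lt_pi (by linarith) (by linarith)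
  rw [im_sq_eq_norm_sq_mul_sin_two_mul_arg]
  positivity

lemma im_neg_one_div_pos {τ : ℂ} (hτ : 0 < τ.im) : 0 < (-1 / τ).im := by
  simpa [neg_div] using UpperHalfPlane.im_inv_neg_coe_pos ⟨τ, hτ⟩

lemma Gb_eq_zetaBar_mul_qPochhammer_div_qPochhammer (b x : ℂ) :
    Gb b x = zetaBar b * qPochhammer (𝕢 1 (b⁻¹ * x) * 𝕢 1 (-1 / b ^ 2)) (𝕢 1 (-1 / b ^ 2)) /
      qPochhammer (𝕢 1 (b * x)) (𝕢 1 (b ^ 2)) := by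
  have hnum (n : ℕ) : cexp (2 * π * I * b⁻¹ * (x - (n + 1) * b⁻¹)) =
      𝕢 1 (b⁻¹ * x) * 𝕢 1 (-1 / b ^ 2) * 𝕢 1 (-1 / b ^ 2) ^ n := by
    rw [← qParam_nat_mul, ← qParam_add, ← qParam_add, qParam]
    push_cast
    ring_nf
  have hden (n : ℕ) : cexp (2 * π * I * b * (x + n * b)) =
      𝕢 1 (b * x) * 𝕢 1 (b ^ 2) ^ n := by
    rw [← qParam_nat_mul, ← qParam_add, qParam]
    push_cast
    ring_nf
  simp only [Gb, hnum, hden, qPochhammer]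

lemma zetaBar_eq_inv_sqrt_I_mul_qParam_div (b : ℂ) :
    zetaBar b = (sqrt I)⁻¹ * (𝕢 24 (-1 / b ^ 2) / 𝕢 24 (b ^ 2)) := by
  rw [sqrt_eq_exp I_ne_zero, log_I, zetaBar, qParam, qParam, ← Complex.exp_neg,
    ← Complex.exp_sub, ← Complex.exp_add]
  push_cast
  ring_nf

lemma zetaBar_mul_qPochhammer_div_qPochhammer {b : ℂ} (hb : 0 < (b ^ 2).im) :
    zetaBar b * qPochhammer (𝕢 1 (-1 / b ^ 2)) (𝕢 1 (-1 / b ^ 2)) /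
      qPochhammer (𝕢 1 (b ^ 2)) (𝕢 1 (b ^ 2)) = -I * sqrt (b ^ 2) := by
  have hinversion : η (-1 / b ^ 2) = (sqrt I)⁻¹ * (sqrt (b ^ 2) * η (b ^ 2)) :=
    ModularForm.eta_comp_eq_csqrt_I_inv hb
  have hsqrtI : sqrt I * sqrt I = I := (sq _).symm.trans (cpow_ofNat_inv_pow I 2)
  calc _ = (sqrt I)⁻¹ * (η (-1 / b ^ 2) / η (b ^ 2)) := by
        rw [zetaBar_eq_inv_sqrt_I_mul_qParam_div, eta_eq_qParam_mul_qPochhammer,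
          eta_eq_qParam_mul_qPochhammer, mul_div_mul_comm, ← mul_assoc, mul_div_assoc]
    _ = (sqrt I)⁻¹ * ((sqrt I)⁻¹ * sqrt (b ^ 2)) := by
        rw [hinversion, ← mul_assoc, mul_div_cancel_right₀ _ (ModularForm.eta_ne_zero hb)]
    _ = -I * sqrt (b ^ 2) := by
        rw [← mul_assoc, ← mul_inv, hsqrtI, inv_I]

lemma tendsto_mul_Gb {b : ℂ} (hb : 0 < (b ^ 2).im) :
    Tendsto (fun x : ℂ => x * Gb b x) (𝓝[≠] 0)
      (𝓝 (-(2 * π * I * b)⁻¹ *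
        (zetaBar b * qPochhammer (𝕢 1 (-1 / b ^ 2)) (𝕢 1 (-1 / b ^ 2)) /
          qPochhammer (𝕢 1 (b ^ 2)) (𝕢 1 (b ^ 2))))) := by
  set q := 𝕢 1 (b ^ 2)
  set qDual := 𝕢 1 (-1 / b ^ 2)
  have hq : ‖q‖ < 1 := norm_qParam_lt_one one_pos hb
  have hqDual : ‖qDual‖ < 1 := norm_qParam_lt_one one_pos (im_neg_one_div_pos hb)
  have hb0 : b ≠ 0 := by
    rintro rfl
    simp at hb
  have hpole := tendsto_div_one_sub_qParam_const_mul one_ne_zero hb0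
  have hnum := (tendsto_qPochhammer_qParam_const_mul 1 b⁻¹ qDual hqDual).const_mul (zetaBar b)
  have hden := tendsto_qPochhammer_qParam_const_mul 1 b q hq
  have hregular := (hnum.div hden (qPochhammer_qParam_self_ne_zero hb)).mono_left
    (nhdsWithin_le_nhds (s := {0}ᶜ))
  rw [ofReal_one, div_one] at hpole
  refine (hpole.mul hregular).congr fun x => ?_
  rw [Gb_eq_zetaBar_mul_qPochhammer_div_qPochhammer, qPochhammer_eq_one_sub_mul (𝕢 1 (b * x)) hq,
    Pi.div_apply, div_mul_div_comm, mul_div_assoc]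

lemma setOf_one_sub_exp_ne_zero_subset_compl_zero (b : ℂ) :
    {x : ℂ | ∀ n : ℕ, 1 - cexp (2 * π * I * b * (x + n * b)) ≠ 0} ⊆ {0}ᶜ := by
  rintro x hx rfl
  exact hx 0 (by simp)

/-- The factor `√(b²) / b` is `1` if `b` lies in the first quadrant and `-1` if it lies in the
third. -/
theorem stmt4_general {b : ℂ} (hb : 0 < (b ^ 2).im) :
    Tendsto (fun x : ℂ => x * Gb b x) (𝓝[≠] 0) (𝓝 (sqrt (b ^ 2) / b / (2 * π))) := by
  have hlim := tendsto_mul_Gb hb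
  rw [zetaBar_mul_qPochhammer_div_qPochhammer hb] at hlim
  convert hlim using 2
  field_simp

/-- For `b` with `0 < arg b < π/2`, `lim_{x→0} x · G_b(x) = 1/(2π)`, the limit being taken
over points `x` at which `G_b` is defined (no vanishing factor in the denominator product). -/
theorem stmt4 (b : ℂ) (h1 : 0 < b.arg) (h2 : b.arg < Real.pi / 2) :
    Tendsto (fun x : ℂ => x * Gb b x)
      (𝓝[{x : ℂ | ∀ n : ℕ,
        1 - Complex.exp (2 * Real.pi * Complex.I * b * (x + n * b)) ≠ 0}] (0 : ℂ))
      (𝓝 (1 / (2 * (Real.pi : ℂ)))) := by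
  have hb : b ≠ 0 := by
    rintro rfl
    simp at h1
  have hsqrt : sqrt (b ^ 2) = b := pow_cpow_ofNat_inv (n := 2) (by linarith) h2.le
  have hlim := stmt4_general (im_sq_pos_of_arg h1 h2)
  rw [hsqrt, div_self hb] at hlim
  exact hlim.mono_left (nhdsWithin_mono 0 (setOf_one_sub_exp_ne_zero_subset_compl_zero b))
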